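/- For every x ∈ ℝ: K_Aiⁿ(x,x) > 0 for all integers n ≥ 1, and there is C > 0 such that for every integer n ≥ 1 and every y ∈ [−2·n^{2/3}, ∞) with |y| > |x| + 1: K_Aiⁿ(x,y)²/K_Aiⁿ(x,x) ≤ C·|y|^{−3/2}. -/

import Mathlib

open MeasureTheory Filter Set

noncomputable section

/-- The Airy function `Ai(x) = (1/π)·lim_{b→∞} ∫_0^b cos(t³/3 + x·t) dt`. -/
def Ai (x : ℝ) : ℝ :=
  (1 / Real.pi) *
    limUnder Filter.atTop (fun b : ℝ => ∫ t in (0:ℝ)..b, Real.cos (t ^ 3 / 3 + x * t))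

/-- The Airy kernel. -/
def KAi (x y : ℝ) : ℝ :=
  if x = y then (deriv Ai x) ^ 2 - x * (Ai x) ^ 2
  else (Ai x * deriv Ai y - deriv Ai x * Ai y) / (x - y)

/-- One-point correlation function of the Airy₂ random point field. -/
def rho (x : ℝ) : ℝ := (deriv Ai x) ^ 2 - x * (Ai x) ^ 2

/-- Probabilists' Hermite polynomial `Ĥ_m(x) = (−1)^m e^{x²/2} (d/dx)^m e^{−x²/2}`. -/
def hermiteP (m : ℕ) (x : ℝ) : ℝ :=
  (-1 : ℝ) ^ m * Real.exp (x ^ 2 / 2) * iteratedDeriv m (fun t => Real.exp (-t ^ 2 / 2)) x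

/-- Normalized oscillator function `φ_m`. -/
def osc (m : ℕ) (x : ℝ) : ℝ :=
  (2 * Real.pi) ^ (-(1:ℝ)/4) * ((m.factorial : ℝ)) ^ (-(1:ℝ)/2) *
    Real.exp (-x ^ 2 / 4) * hermiteP m x

/-- `ψ_mⁿ(x) = n^{1/12}·φ_m(2√n + n^{−1/6}·x)`. -/
def psiUp (n m : ℕ) (x : ℝ) : ℝ :=
  (n : ℝ) ^ ((1:ℝ)/12) * osc m (2 * Real.sqrt n + (n : ℝ) ^ (-(1:ℝ)/6) * x)

/-- `ψ_n = ψ_nⁿ`. -/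
def psiN (n : ℕ) : ℝ → ℝ := psiUp n n

/-- The finite-`n` Airy kernel. -/
def KAiN (n : ℕ) (x y : ℝ) : ℝ :=
  if x = y then
    (deriv (psiN n) x) ^ 2 - psiN n x * deriv (deriv (psiN n)) x
      - (1 / (2 * (n : ℝ) ^ ((1:ℝ)/3))) * (psiN n x) ^ 2
  else
    (psiN n x * deriv (psiN n) y - deriv (psiN n) x * psiN n y) / (x - y)
      - (1 / (2 * (n : ℝ) ^ ((1:ℝ)/3))) * (psiN n x * psiN n y)

/-- `(εf)(x) = (1/2)·∫_ℝ sign(x − y)·f(y) dy`. -/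
def epsF (f : ℝ → ℝ) (x : ℝ) : ℝ := (1/2) * ∫ y : ℝ, Real.sign (x - y) * f y

/-- `εψ_n`. -/
def epsPsi (n : ℕ) : ℝ → ℝ := epsF (psiN n)

/-- `J₁(x,y) = K_Ai(x,y) + (1/2)·Ai(x)·(1 − ∫_y^∞ Ai(u) du)`. -/
def J1 (x y : ℝ) : ℝ := KAi x y + (1/2) * Ai x * (1 - ∫ u in Set.Ioi y, Ai u)

/-- Scalar part of the quaternion product of Airy₁ kernels. -/
def L1 (x y : ℝ) : ℝ :=
  J1 x y * J1 y x -
    deriv (fun v => J1 x v) y * ((∫ u in x..y, J1 u x) - (1/2) * Real.sign (y - x))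

/-- `J₁ⁿ(x,y) = K_Aiⁿ(x,y) + (1/2)·ψ_{n−1}ⁿ(x)·(εψ_n)(y)`. -/
def J1N (n : ℕ) (x y : ℝ) : ℝ :=
  KAiN n x y + (1/2) * psiUp n (n - 1) x * epsPsi n y

/-- Scalar part of the quaternion product of finite-`n` Airy₁ kernels. -/
def L1N (n : ℕ) (x y : ℝ) : ℝ :=
  J1N n x y * J1N n y x -
    deriv (fun v => J1N n x v) y * ((∫ u in x..y, J1N n u x) - (1/2) * Real.sign (y - x))

/-- `ρ̂(x) = (1/π)·√(−x)` for `x < 0`, and `0` otherwise. -/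
def rhoHat (x : ℝ) : ℝ := if x < 0 then Real.sqrt (-x) / Real.pi else 0

/-- `ρ̂ⁿ(x) = (1/π)·√(−x·(1 + x/(4·n^{2/3})))` on `(−4n^{2/3}, 0)`, and `0` otherwise. -/
def rhoHatN (n : ℕ) (x : ℝ) : ℝ :=
  if -(4 * (n : ℝ) ^ ((2:ℝ)/3)) < x ∧ x < 0 then
    Real.sqrt (-x * (1 + x / (4 * (n : ℝ) ^ ((2:ℝ)/3)))) / Real.pi
  else 0

/-- `G_{a,b,c}(x,y) = |x|^{−a}·|y|^{−b}·|x−y|^{−c}`. -/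
def Gf (a b c : ℝ) (x y : ℝ) : ℝ := |x| ^ (-a) * |y| ^ (-b) * |x - y| ^ (-c)

/-- `Ĝ_{a,b,c}(x,y) = G_{a,b,c}(x,y) + G_{a,b,c}(y,x)`. -/
def Ghat (a b c : ℝ) (x y : ℝ) : ℝ := Gf a b c x y + Gf a b c y x

/-- Soft-edge one-point correlation function of the `n`-point GUE ensemble. -/
def rhoN (n : ℕ) (x : ℝ) : ℝ :=
  (deriv (psiN n) x) ^ 2 - (x ^ 2 / (4 * (n : ℝ) ^ ((2:ℝ)/3)) + x) * (psiN n x) ^ 2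

end

/-- The potential of the rescaled oscillator equation. -/
noncomputable def palmP (s x : ℝ) : ℝ := x + x ^ 2 / (4 * s ^ 4) - 1 / (2 * s ^ 2)

/-- The energy functional. -/
noncomputable def palmE (s : ℝ) (f g : ℝ → ℝ) (x : ℝ) : ℝ := g x ^ 2 - palmP s x * f x ^ 2

lemma palmP_hasDerivAt (s x : ℝ) : HasDerivAt (palmP s) (1 + x / (2 * s ^ 4)) x := by
  unfold palmP
  have h := (((hasDerivAt_id' x).add (((hasDerivAt_id' x).pow 2).div_const (4 * s ^ 4))).sub_const (1 / (2 * s ^ 2)))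
  refine HasDerivAt.congr_deriv h ?_
  push_cast
  ring

lemma palmE_hasDerivAt {s : ℝ} {f g : ℝ → ℝ} (hf : ∀ x, HasDerivAt f (g x) x)
    (hg : ∀ x, HasDerivAt g (palmP s x * f x) x) (x : ℝ) :
    HasDerivAt (palmE s f g) (-(1 + x / (2 * s ^ 4)) * f x ^ 2) x := by
  have h := ((hg x).pow 2).sub ((palmP_hasDerivAt s x).mul ((hf x).pow 2))
  refine HasDerivAt.congr_deriv (f := palmE s f g) h ?_
  push_cast
  simp only [Pi.pow_apply]
  ring

lemma palm_antitone {F F' : ℝ → ℝ} {a b : ℝ} (hab : a ≤ b)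
    (hF : ∀ x, a ≤ x → x ≤ b → HasDerivAt F (F' x) x)
    (hF' : ∀ x, a ≤ x → x ≤ b → F' x ≤ 0) : F b ≤ F a := by
  have : AntitoneOn F (Icc a b) := by
    apply antitoneOn_of_deriv_nonpos (convex_Icc a b)
    · intro x hx
      exact (hF x hx.1 hx.2).continuousAt.continuousWithinAt
    · intro x hx
      rw [interior_Icc] at hx
      exact (hF x hx.1.le hx.2.le).differentiableAt.differentiableWithinAt
    · intro x hx
      rw [interior_Icc] at hx
      rw [(hF x hx.1.le hx.2.le).deriv]
      exact hF' x hx.1.le hx.2.le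
  exact this (left_mem_Icc.2 hab) (right_mem_Icc.2 hab) hab

lemma palmP_nonneg {s x : ℝ} (hs : 1 ≤ s) (hx : 1 ≤ x) : 0 ≤ palmP s x := by
  unfold palmP
  have h1 : 1 / (2 * s ^ 2) ≤ 1 := by
    rw [div_le_one (by positivity)]
    nlinarith
  have h2 : 0 ≤ x ^ 2 / (4 * s ^ 4) := by positivity
  linarith

/-- sign of `f g` on the right -/
lemma palmW_nonpos {s : ℝ} {f g : ℝ → ℝ} (hs : 1 ≤ s) (hf : ∀ x, HasDerivAt f (g x) x)
    (hg : ∀ x, HasDerivAt g (palmP s x * f x) x) (h0 : Tendsto f atTop (nhds 0))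
    {y : ℝ} (hy : 1 ≤ y) : f y * g y ≤ 0 := by
  by_contra hcon
  push Not at hcon
  have hW : ∀ z, y ≤ z → 0 ≤ f z * g z := by
    intro z hz
    have := palm_antitone (F := fun x => -(f x * g x))
      (F' := fun x => -(g x * g x + f x * (palmP s x * f x))) hz
      (fun x _ _ => ((hf x).mul (hg x)).neg)
      (fun x hx _ => by
        have := palmP_nonneg hs (hy.trans hx)
        nlinarith [mul_self_nonneg (g x), mul_nonneg this (mul_self_nonneg (f x))])
    linarith
  have h2 : ∀ z, y ≤ z → f y ^ 2 ≤ f z ^ 2 := by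
    intro z hz
    have := palm_antitone (F := fun x => -(f x ^ 2))
      (F' := fun x => -(2 * (f x * g x))) hz
      (fun x _ _ => by
        refine HasDerivAt.congr_deriv ((hf x).pow 2).neg ?_
        push_cast
        ring)
      (fun x hx _ => by
        have := hW x hx
        linarith)
    linarith
  have h3 : Tendsto (fun z => f z ^ 2) atTop (nhds 0) := by
    simpa using h0.pow 2
  have h4 : f y ^ 2 ≤ 0 := ge_of_tendsto h3 ((eventually_ge_atTop y).mono h2)
  have h5 : f y = 0 := by nlinarith [sq_nonneg (f y)]
  rw [h5] at hcon
  simp at hcon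

/-- decay of the energy on the right -/
lemma palmE_right {s : ℝ} {f g : ℝ → ℝ} (hs : 1 ≤ s) (hf : ∀ x, HasDerivAt f (g x) x)
    (hg : ∀ x, HasDerivAt g (palmP s x * f x) x) (h0 : Tendsto f atTop (nhds 0))
    {y : ℝ} (hy : 1 ≤ y) :
    y ^ 2 * palmE s f g y ≤ palmE s f g 1 - 2 * (f 1 * g 1) + f 1 ^ 2 := by
  have hW := palmW_nonpos hs hf hg h0 hy
  have := palm_antitone (F := fun x => x ^ 2 * palmE s f g x - 2 * x * (f x * g x) + f x ^ 2)
      (F' := fun x => -4 * x * palmP s x * f x ^ 2 - x ^ 2 * (1 + x / (2 * s ^ 4)) * f x ^ 2) hy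
      (fun x _ _ => by
        have h := ((((hasDerivAt_id' x).pow 2).mul (palmE_hasDerivAt hf hg x)).sub
          (((hasDerivAt_id' x).const_mul 2).mul ((hf x).mul (hg x)))).add ((hf x).pow 2)
        refine HasDerivAt.congr_deriv h ?_
        push_cast
        simp only [Pi.pow_apply, Pi.mul_apply, palmE]
        ring)
      (fun x hx _ => by
        have h1 := palmP_nonneg hs hx
        have : 0 ≤ x * palmP s x * f x ^ 2 := by positivity
        have : 0 ≤ x ^ 2 * (1 + x / (2 * s ^ 4)) * f x ^ 2 := by positivity
        linarith)
  nlinarith [sq_nonneg (f y), mul_nonneg (by linarith : (0:ℝ) ≤ y) (neg_nonneg.2 hW)]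

/-- Gronwall from `-1` to `1`. -/
lemma palm_mid {s : ℝ} {f g : ℝ → ℝ} (hs : 1 ≤ s) (hf : ∀ x, HasDerivAt f (g x) x)
    (hg : ∀ x, HasDerivAt g (palmP s x * f x) x) :
    f 1 ^ 2 + g 1 ^ 2 ≤ Real.exp 6 * (f (-1) ^ 2 + g (-1) ^ 2) := by
  have := palm_antitone (F := fun x => (f x ^ 2 + g x ^ 2) * Real.exp (-3 * x))
      (F' := fun x => ((2 * (1 + palmP s x)) * (f x * g x) - 3 * (f x ^ 2 + g x ^ 2)) *
        Real.exp (-3 * x)) (by norm_num : (-1:ℝ) ≤ 1)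
      (fun x _ _ => by
        have h := (((hf x).pow 2).add ((hg x).pow 2)).mul ((hasDerivAt_id' x).const_mul (-3)).exp
        refine HasDerivAt.congr_deriv h ?_
        push_cast
        simp only [Pi.pow_apply, Pi.add_apply]
        ring)
      (fun x hx hx' => by
        apply mul_nonpos_of_nonpos_of_nonneg _ (Real.exp_pos _).le
        have h1 : 1 / (2 * s ^ 2) ≤ 1 / 2 := by
          apply one_div_le_one_div_of_le (by norm_num); nlinarith
        have h1' : 0 ≤ 1 / (2 * s ^ 2) := by positivity
        have h2 : 0 ≤ x ^ 2 / (4 * s ^ 4) := by positivity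
        have h3 : x ^ 2 / (4 * s ^ 4) ≤ 1 := by
          rw [div_le_one (by positivity)]
          have : 1 ≤ s ^ 4 := one_le_pow₀ hs
          nlinarith
        have h4 : |1 + palmP s x| ≤ 3 := by
          unfold palmP; rw [abs_le]; constructor <;> linarith
        have h5 : |f x * g x| ≤ (f x ^ 2 + g x ^ 2) / 2 := by
          rw [abs_le]; constructor <;> nlinarith [sq_nonneg (f x + g x), sq_nonneg (f x - g x)]
        have h6 : (1 + palmP s x) * (f x * g x) ≤ 3 * ((f x ^ 2 + g x ^ 2) / 2) := by
          calc _ ≤ |(1 + palmP s x) * (f x * g x)| := le_abs_self _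
            _ = |1 + palmP s x| * |f x * g x| := abs_mul _ _
            _ ≤ _ := by gcongr
        linarith)
  have e : Real.exp (-3 * -1) = Real.exp 6 * Real.exp (-3 * 1) := by
    rw [← Real.exp_add]; norm_num
  rw [e] at this
  have hp := Real.exp_pos (-3 * 1)
  nlinarith

/-- local lower bound for the energy -/
lemma palmE_lower {s : ℝ} {f g : ℝ → ℝ} (hs : 1 ≤ s) (hf : ∀ x, HasDerivAt f (g x) x)
    (hg : ∀ x, HasDerivAt g (palmP s x * f x) x) {x d B : ℝ} (hd : 0 < d)
    (hdB : d ^ 2 * B ≤ 1 / 4) (hxs : -s ^ 4 ≤ x)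
    (hp : ∀ z, x ≤ z → z ≤ x + d → |palmP s z| ≤ B) (hE : 0 ≤ palmE s f g (x + d)) :
    (1 / 4) * (d * f x ^ 2 + d ^ 2 * (f x * g x) + 3 / 10 * d ^ 3 * g x ^ 2) ≤ palmE s f g x := by
  have := palm_antitone (F := fun z => palmE s f g z - (1 / 4) * ((x + d - z) * f z ^ 2 +
        (x + d - z) ^ 2 * (f z * g z) + 3 / 10 * (x + d - z) ^ 3 * g z ^ 2))
      (F' := fun z => -(1 + z / (2 * s ^ 4)) * f z ^ 2 - (1 / 4) * (- f z ^ 2 +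
        (1 / 10) * (x + d - z) ^ 2 * g z ^ 2 + (x + d - z) ^ 2 * palmP s z * f z ^ 2 +
        6 / 10 * (x + d - z) ^ 3 * palmP s z * (f z * g z))) (by linarith : x ≤ x + d)
      (fun z _ _ => by
        have ht : HasDerivAt (fun z => x + d - z) (-1) z := by
          simpa using (hasDerivAt_id' z).const_sub (x + d)
        have h := (palmE_hasDerivAt hf hg z).sub ((((ht.mul ((hf z).pow 2)).add
          ((ht.pow 2).mul ((hf z).mul (hg z)))).add
          (((ht.pow 3).const_mul (3 / 10)).mul ((hg z).pow 2))).const_mul (1 / 4))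
        refine HasDerivAt.congr_deriv h ?_
        push_cast
        simp only [Pi.pow_apply, Pi.mul_apply]
        ring)
      (fun z hz hz' => by
        have h1 : 1 / 2 ≤ 1 + z / (2 * s ^ 4) := by
          have : -(1 / 2) ≤ z / (2 * s ^ 4) := by
            rw [le_div_iff₀ (by positivity)]; linarith
          linarith
        have hp' := hp z hz hz'
        set t := x + d - z with ht
        have t0 : 0 ≤ t := by linarith
        have t1 : t ≤ d := by linarith
        have h2 : |t ^ 2 * palmP s z| ≤ 1 / 4 := by
          rw [abs_mul, abs_of_nonneg (sq_nonneg t)]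
          calc t ^ 2 * |palmP s z| ≤ d ^ 2 * B := by gcongr
            _ ≤ _ := hdB
        set q := t ^ 2 * palmP s z with hq
        rw [abs_le] at h2
        have e : 6 / 10 * t ^ 3 * palmP s z * (f z * g z) = 6 / 10 * q * (f z * (t * g z)) := by
          rw [hq]; ring
        rw [e]
        have e2 : (1 / 10) * t ^ 2 * g z ^ 2 = (1 / 10) * (t * g z) ^ 2 := by ring
        rw [e2]
        set u := t * g z
        have hq2 : q ^ 2 ≤ 1 / 16 := by nlinarith
        nlinarith [sq_nonneg (u + 3 * q * f z), mul_nonneg (sub_nonneg.2 h1) (sq_nonneg (f z)),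
          mul_nonneg (sub_nonneg.2 hq2) (sq_nonneg (f z)),
          mul_nonneg (sub_nonneg.2 h2.1) (sq_nonneg (f z))])
  have e : x + d - (x + d) = 0 := by ring
  have e2 : x + d - x = d := by ring
  rw [e, e2] at this
  norm_num at this
  linarith

/-- WKB bound on the left. -/
lemma palm_wkb {s : ℝ} {f g : ℝ → ℝ} (hs : 1 ≤ s) (hf : ∀ x, HasDerivAt f (g x) x)
    (hg : ∀ x, HasDerivAt g (palmP s x * f x) x)
    (hE : palmE s f g (-2 * s ^ 4) ≤ 4 * s ^ 2) {y : ℝ} (hy : -2 * s ^ 4 ≤ y) (hy1 : y ≤ -1) :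
    ∃ r : ℝ, 0 < r ∧ r ^ 2 = -palmP s y ∧
      g y ^ 2 / r + r * f y ^ 2 ≤ 16 * Real.exp 12 := by
  have hs4 : 1 ≤ s ^ 4 := one_le_pow₀ hs
  have hs2 : 1 ≤ s ^ 2 := one_le_pow₀ hs
  -- bounds on the potential
  have hP : ∀ x, -2 * s ^ 4 ≤ x → x ≤ -1 → -x / 2 ≤ -palmP s x ∧ -palmP s x ≤ 2 * -x := by
    intro x hx hx1
    have h1 : x ^ 2 / (4 * s ^ 4) ≤ -x / 2 := by
      rw [div_le_iff₀ (by positivity)]; nlinarith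
    have h1' : 0 ≤ x ^ 2 / (4 * s ^ 4) := by positivity
    have h2 : 1 / (2 * s ^ 2) ≤ 1 / 2 := by
      apply one_div_le_one_div_of_le (by norm_num); nlinarith
    have h2' : 0 ≤ 1 / (2 * s ^ 2) := by positivity
    unfold palmP
    constructor <;> linarith
  set r : ℝ → ℝ := fun x => Real.sqrt (-palmP s x) with hr
  have hr2 : ∀ x, -2 * s ^ 4 ≤ x → x ≤ -1 → r x ^ 2 = -palmP s x := fun x h1 h2 =>
    Real.sq_sqrt (by linarith [(hP x h1 h2).1])
  have hr0 : ∀ x, -2 * s ^ 4 ≤ x → x ≤ -1 → 7 / 10 ≤ r x := fun x h1 h2 =>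
    Real.le_sqrt_of_sq_le (by linarith [(hP x h1 h2).1])
  have hrd : ∀ x, -2 * s ^ 4 ≤ x → x ≤ -1 →
      HasDerivAt r (-(1 + x / (2 * s ^ 4)) / (2 * r x)) x := fun x h1 h2 =>
    (palmP_hasDerivAt s x).neg.sqrt (by
      have := (hP x h1 h2).1
      simp only [Pi.neg_apply]
      linarith)
  have hab : ∀ x r : ℝ, 0 < r → |f x * g x| ≤ (g x ^ 2 / r + r * f x ^ 2) / 2 := by
    intro x r hr
    have e : (g x ^ 2 / r + r * f x ^ 2) / 2 = ((g x ^ 2 + (r * f x) ^ 2) / 2) / r := by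
      field_simp
    rw [e, le_div_iff₀ hr]
    have : |f x * g x| * r = |(r * f x) * g x| := by
      rw [mul_assoc, abs_mul r, abs_of_pos hr]; ring
    rw [this, abs_le]
    constructor <;> nlinarith [sq_nonneg (r * f x + g x), sq_nonneg (r * f x - g x)]
  set G : ℝ → ℝ := fun x => g x ^ 2 / r x + r x * f x ^ 2 +
    -(1 + x / (2 * s ^ 4)) / (2 * r x ^ 3) * (f x * g x) with hG
  have hd1 : ∀ x, -2 * s ^ 4 ≤ x → x ≤ -1 → 0 ≤ 1 + x / (2 * s ^ 4) ∧ 1 + x / (2 * s ^ 4) ≤ 1 := by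
    intro x hx hx1
    have h1 : -1 ≤ x / (2 * s ^ 4) := by rw [le_div_iff₀ (by positivity)]; linarith
    have h2 : x / (2 * s ^ 4) ≤ 0 := div_nonpos_of_nonpos_of_nonneg (by linarith) (by positivity)
    constructor <;> linarith
  have hr3 : ∀ x, -2 * s ^ 4 ≤ x → x ≤ -1 → 7 / 20 * -x ≤ r x ^ 3 := by
    intro x h1 h2
    have e : r x ^ 3 = r x * r x ^ 2 := by ring
    rw [e, hr2 x h1 h2]
    nlinarith [hr0 x h1 h2, (hP x h1 h2).1]
  have hr5 : ∀ x, -2 * s ^ 4 ≤ x → x ≤ -1 → 7 / 40 * x ^ 2 ≤ r x ^ 5 := by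
    intro x h1 h2
    have e : r x ^ 5 = r x ^ 3 * r x ^ 2 := by ring
    rw [e, hr2 x h1 h2]
    have := mul_le_mul (hr3 x h1 h2) (hP x h1 h2).1 (by linarith)
      (by have := hr0 x h1 h2; positivity)
    linarith
  have hFG : ∀ x, -2 * s ^ 4 ≤ x → x ≤ -1 → g x ^ 2 / r x + r x * f x ^ 2 ≤ 4 * G x := by
    intro x h1 h2
    have k0 := hr0 x h1 h2
    have k1 := hab x (r x) (by linarith)
    have k2 : |-(1 + x / (2 * s ^ 4)) / (2 * r x ^ 3)| ≤ 3 / 2 := by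
      have k3 := hr3 x h1 h2
      have k4 := hd1 x h1 h2
      rw [abs_div, abs_neg, abs_of_nonneg k4.1, abs_of_pos (by linarith),
        div_le_iff₀ (by linarith)]
      linarith
    have k3 : |-(1 + x / (2 * s ^ 4)) / (2 * r x ^ 3) * (f x * g x)| ≤
        3 / 2 * ((g x ^ 2 / r x + r x * f x ^ 2) / 2) := by
      rw [abs_mul]; gcongr
    rw [abs_le] at k3
    simp only [hG]
    linarith [k3.1]
  have hGd : ∀ x, -2 * s ^ 4 ≤ x → x ≤ -1 → HasDerivAt G
      ((-(1 / (2 * s ^ 4)) / (2 * r x ^ 3) - 3 / 4 * (1 + x / (2 * s ^ 4)) ^ 2 / r x ^ 5) *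
        (f x * g x)) x := by
    intro x h1 h2
    have k0 : r x ≠ 0 := by have := hr0 x h1 h2; positivity
    have hl : HasDerivAt (fun x : ℝ => -(1 + x / (2 * s ^ 4))) (-(1 / (2 * s ^ 4))) x :=
      (((hasDerivAt_id' x).div_const (2 * s ^ 4)).const_add 1).neg
    have hR := hrd x h1 h2
    have h := ((((hg x).pow 2).div hR k0).add (hR.mul ((hf x).pow 2))).add
      ((hl.div ((hR.pow 3).const_mul 2) (by simp only [Pi.pow_apply]; positivity)).mul
        ((hf x).mul (hg x)))
    refine HasDerivAt.congr_deriv (f := G) h ?_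
    push_cast
    simp only [Pi.pow_apply, Pi.mul_apply, Pi.div_apply]
    have hpp : palmP s x = - r x ^ 2 := by rw [hr2 x h1 h2]; ring
    rw [hpp]
    clear h hR
    generalize r x = R at *
    generalize x / (2 * s ^ 4) = c
    generalize 1 / (2 * s ^ 4) = c'
    generalize f x = F
    generalize g x = H
    field_simp
    ring
  have hmono := palm_antitone (F := fun x => G x * Real.exp (12 / x))
    (F' := fun x => ((-(1 / (2 * s ^ 4)) / (2 * r x ^ 3) -
        3 / 4 * (1 + x / (2 * s ^ 4)) ^ 2 / r x ^ 5) * (f x * g x) - 12 / x ^ 2 * G x) *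
        Real.exp (12 / x)) hy
    (fun x h1 h2 => by
      have hx0 : x ≠ 0 := by linarith
      have h := (hGd x h1 (h2.trans hy1)).mul (((hasDerivAt_inv hx0).const_mul 12).exp)
      have h' : HasDerivAt (fun x => G x * Real.exp (12 / x)) _ x := h
      refine HasDerivAt.congr_deriv h' ?_
      rw [div_eq_mul_inv 12 x]
      ring)
    (fun x h1 h2' => by
      have h2 := h2'.trans hy1
      apply mul_nonpos_of_nonpos_of_nonneg _ (Real.exp_pos _).le
      have k0 := hr0 x h1 h2
      have k1 := hab x (r x) (by linarith)
      have k2 := hFG x h1 h2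
      have x2 : 0 < x ^ 2 := by nlinarith
      have a1 : |-(1 / (2 * s ^ 4)) / (2 * r x ^ 3)| ≤ 10 / 7 / x ^ 2 := by
        have k3 := hr3 x h1 h2
        rw [abs_div, abs_neg, abs_of_pos (by positivity), abs_of_pos (by linarith),
          div_div, div_le_div_iff₀ (by positivity) x2]
        have : x ^ 2 ≤ -x * (2 * s ^ 4) := by nlinarith
        have : 7 / 10 * x ^ 2 ≤ 2 * s ^ 4 * (2 * r x ^ 3) := by nlinarith
        linarith
      have a2 : |3 / 4 * (1 + x / (2 * s ^ 4)) ^ 2 / r x ^ 5| ≤ 30 / 7 / x ^ 2 := by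
        have k3 := hr5 x h1 h2
        have k4 := hd1 x h1 h2
        have k5 : (1 + x / (2 * s ^ 4)) ^ 2 ≤ 1 := pow_le_one₀ k4.1 k4.2
        rw [abs_of_nonneg (by positivity), div_le_div_iff₀ (by positivity) x2]
        nlinarith [sq_nonneg (1 + x / (2 * s ^ 4))]
      have a3 : |-(1 / (2 * s ^ 4)) / (2 * r x ^ 3) -
        3 / 4 * (1 + x / (2 * s ^ 4)) ^ 2 / r x ^ 5| ≤ 6 / x ^ 2 := by
        refine (abs_sub _ _).trans ((add_le_add a1 a2).trans ?_)
        rw [← add_div]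
        gcongr
        norm_num
      have a4 : |f x * g x| ≤ 2 * G x := by linarith
      have := (le_abs_self _).trans ((abs_mul _ _).le.trans
        (mul_le_mul a3 a4 (abs_nonneg _) (by positivity)))
      have e : 6 / x ^ 2 * (2 * G x) = 12 / x ^ 2 * G x := by ring
      linarith)
  have hst1 : -2 * s ^ 4 ≤ -1 := by linarith
  have hGs : G (-2 * s ^ 4) ≤ 4 := by
    have e0 : 1 + (-2 * s ^ 4) / (2 * s ^ 4) = 0 := by field_simp; norm_num
    have k0 := hr0 _ le_rfl hst1
    have k2 := hr2 _ le_rfl hst1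
    have hrs : s ^ 2 ≤ r (-2 * s ^ 4) := by
      apply Real.le_sqrt_of_sq_le
      have : -palmP s (-2 * s ^ 4) = s ^ 4 + 1 / (2 * s ^ 2) := by
        unfold palmP; field_simp; ring
      rw [this]
      have : 0 ≤ 1 / (2 * s ^ 2) := by positivity
      nlinarith
    have e : G (-2 * s ^ 4) = palmE s f g (-2 * s ^ 4) / r (-2 * s ^ 4) := by
      simp only [hG, e0]
      have : palmP s (-2 * s ^ 4) = - r (-2 * s ^ 4) ^ 2 := by rw [k2]; ring
      unfold palmE
      rw [this]
      have k3 : r (-2 * s ^ 4) ≠ 0 := by linarith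
      generalize r (-2 * s ^ 4) = R at *
      field_simp
      ring
    rw [e, div_le_iff₀ (by linarith)]
    linarith
  have hy0 := hr0 y hy hy1
  refine ⟨r y, by linarith, hr2 y hy hy1, ?_⟩
  have h1 := hFG y hy hy1
  have h2 : Real.exp (12 / (-2 * s ^ 4)) ≤ 1 := by
    rw [Real.exp_le_one_iff]
    apply div_nonpos_of_nonneg_of_nonpos (by norm_num) (by linarith)
  have h3 : Real.exp (-12) ≤ Real.exp (12 / y) := by
    rw [Real.exp_le_exp, le_div_iff_of_neg (by linarith)]; linarith
  have hG0 : 0 ≤ G y := by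
    have : 0 ≤ g y ^ 2 / r y + r y * f y ^ 2 := by positivity
    linarith
  have h4 : G y * Real.exp (-12) ≤ 4 := by
    have : G (-2 * s ^ 4) * Real.exp (12 / (-2 * s ^ 4)) ≤ 4 := by
      nlinarith [Real.exp_pos (12 / (-2 * s ^ 4))]
    nlinarith
  have h5 : G y = G y * Real.exp (-12) * Real.exp 12 := by
    rw [mul_assoc, ← Real.exp_add]; simp
  nlinarith [Real.exp_pos 12]

/-- pointwise consequences of the WKB bound -/
lemma palm_left {s : ℝ} {f g : ℝ → ℝ} (hs : 1 ≤ s) (hf : ∀ x, HasDerivAt f (g x) x)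
    (hg : ∀ x, HasDerivAt g (palmP s x * f x) x)
    (hE : palmE s f g (-2 * s ^ 4) ≤ 4 * s ^ 2) {y : ℝ} (hy : -2 * s ^ 4 ≤ y) (hy1 : y ≤ -1) :
    f y ^ 2 ≤ 32 * Real.exp 12 / Real.sqrt (-y) ∧ g y ^ 2 ≤ 32 * Real.exp 12 * Real.sqrt (-y) ∧
      palmE s f g y ≤ 32 * Real.exp 12 * Real.sqrt (-y) := by
  obtain ⟨r, hr, hr2, hF⟩ := palm_wkb hs hf hg hE hy hy1
  have hs4 : 1 ≤ s ^ 4 := one_le_pow₀ hs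
  have hP : -y / 2 ≤ -palmP s y ∧ -palmP s y ≤ 2 * -y := by
    have h1 : y ^ 2 / (4 * s ^ 4) ≤ -y / 2 := by
      rw [div_le_iff₀ (by positivity)]; nlinarith
    have h1' : 0 ≤ y ^ 2 / (4 * s ^ 4) := by positivity
    have h2 : 1 / (2 * s ^ 2) ≤ 1 / 2 := by
      apply one_div_le_one_div_of_le (by norm_num); nlinarith
    have h2' : 0 ≤ 1 / (2 * s ^ 2) := by positivity
    unfold palmP
    constructor <;> linarith
  set t := Real.sqrt (-y) with ht
  have ht2 : t ^ 2 = -y := Real.sq_sqrt (by linarith)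
  have ht0 : 0 < t := Real.sqrt_pos.2 (by linarith)
  have hrt : r ≤ 2 * t := by
    refine abs_le_of_sq_le_sq' ?_ (by positivity) |>.2
    nlinarith
  have htr : t ≤ 2 * r := by
    refine abs_le_of_sq_le_sq' ?_ (by positivity) |>.2
    nlinarith
  have a1 : 0 ≤ g y ^ 2 / r := by positivity
  have a2 : 0 ≤ r * f y ^ 2 := by positivity
  have he := Real.exp_pos 12
  have e1 : palmE s f g y = (g y ^ 2 / r + r * f y ^ 2) * r := by
    unfold palmE
    have : palmP s y = - r ^ 2 := by rw [hr2]; ring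
    rw [this]; field_simp; ring
  have e2 : palmE s f g y ≤ 32 * Real.exp 12 * t := by
    rw [e1]; nlinarith
  have e3 : g y ^ 2 ≤ palmE s f g y := by
    unfold palmE; nlinarith [sq_nonneg (f y)]
  refine ⟨?_, e3.trans e2, e2⟩
  rw [le_div_iff₀ ht0]
  nlinarith [sq_nonneg (f y)]

lemma palm_hermiteP_eq (m : ℕ) (x : ℝ) :
    hermiteP m x = Polynomial.aeval x (Polynomial.hermite m) := by
  rw [Polynomial.hermite_eq_deriv_gaussian', hermiteP, iteratedDeriv_eq_iterate]
  have : (fun t : ℝ => Real.exp (-t ^ 2 / 2)) = fun y : ℝ => Real.exp (-(y ^ 2 / 2)) := by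
    funext t; congr 1; ring
  rw [this]; ring

lemma palm_hermite_derivative (n : ℕ) :
    Polynomial.derivative (Polynomial.hermite (n + 1)) =
      ((n : Polynomial ℤ) + 1) * Polynomial.hermite n := by
  induction n with
  | zero => simp
  | succ n ih =>
    have h1 := Polynomial.hermite_succ n
    rw [Polynomial.hermite_succ (n + 1), Polynomial.derivative_sub, Polynomial.derivative_mul, ih]
    simp only [Polynomial.derivative_X, Polynomial.derivative_mul, Polynomial.derivative_add,
      Polynomial.derivative_natCast, Polynomial.derivative_one]
    rw [h1]; push_cast; ring

lemma palm_hermiteP_hasDerivAt (n : ℕ) (x : ℝ) :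
    HasDerivAt (hermiteP n) (x * hermiteP n x - hermiteP (n + 1) x) x := by
  have e : hermiteP n = fun x => Polynomial.aeval x (Polynomial.hermite n) :=
    funext (palm_hermiteP_eq n)
  rw [e]
  refine HasDerivAt.congr_deriv (Polynomial.hasDerivAt_aeval _ _) ?_
  rw [palm_hermiteP_eq, Polynomial.hermite_succ]
  simp

lemma palm_hermiteP_rec (n : ℕ) (x : ℝ) :
    hermiteP (n + 2) x = x * hermiteP (n + 1) x - (n + 1) * hermiteP n x := by
  rw [palm_hermiteP_eq, palm_hermiteP_eq, palm_hermiteP_eq, Polynomial.hermite_succ (n + 1),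
    palm_hermite_derivative]
  simp

/-- Normalizing constant of the oscillator functions. -/
noncomputable def palmc (m : ℕ) : ℝ := (2 * Real.pi) ^ (-(1:ℝ)/4) * ((m.factorial : ℝ)) ^ (-(1:ℝ)/2)

lemma palmc_succ (m : ℕ) : palmc m = Real.sqrt (m + 1) * palmc (m + 1) := by
  unfold palmc
  have h1 : (0:ℝ) < m + 1 := by positivity
  rw [Nat.factorial_succ]
  push_cast
  rw [Real.mul_rpow h1.le (by positivity), Real.sqrt_eq_rpow]
  have : ((m:ℝ) + 1) ^ ((1:ℝ)/2) * ((m:ℝ) + 1) ^ (-(1:ℝ)/2) = 1 := by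
    rw [← Real.rpow_add h1]; norm_num
  linear_combination (-(2 * Real.pi) ^ (-(1:ℝ)/4) * ((m.factorial : ℝ)) ^ (-(1:ℝ)/2)) * this

lemma palm_osc_eq (m : ℕ) (x : ℝ) : osc m x = palmc m * Real.exp (-x ^ 2 / 4) * hermiteP m x := rfl

/-- Derivative of the oscillator function. -/
noncomputable def oscD (n : ℕ) (x : ℝ) : ℝ := x / 2 * osc n x - Real.sqrt (n + 1) * osc (n + 1) x

lemma palm_exp_hasDerivAt (x : ℝ) :
    HasDerivAt (fun x : ℝ => Real.exp (-x ^ 2 / 4)) (-x / 2 * Real.exp (-x ^ 2 / 4)) x := by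
  have h := (((hasDerivAt_id' x).pow 2).neg.div_const 4).exp
  refine HasDerivAt.congr_deriv h ?_
  simp only [Pi.neg_apply, Pi.pow_apply]
  push_cast; ring

lemma palm_osc_hasDerivAt (n : ℕ) (x : ℝ) : HasDerivAt (osc n) (oscD n x) x := by
  have h := ((palm_exp_hasDerivAt x).const_mul (palmc n)).mul (palm_hermiteP_hasDerivAt n x)
  refine HasDerivAt.congr_deriv (f := osc n) h ?_
  simp only [oscD, palm_osc_eq]
  linear_combination (-Real.exp (-x ^ 2 / 4) * hermiteP (n + 1) x) * palmc_succ n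

lemma palm_osc_rec (n : ℕ) (x : ℝ) :
    Real.sqrt (n + 2) * osc (n + 2) x =
      x * osc (n + 1) x - Real.sqrt (n + 1) * osc n x := by
  simp only [palm_osc_eq]
  have h1 := palmc_succ n
  have h2 := palmc_succ (n + 1)
  have e : ((n + 1 : ℕ) : ℝ) + 1 = n + 2 := by push_cast; ring
  rw [e] at h2
  have hs : Real.sqrt ((n:ℝ) + 1) ^ 2 = n + 1 := Real.sq_sqrt (by positivity)
  rw [palm_hermiteP_rec, h1]
  have h2' : Real.sqrt ((n:ℝ) + 2) * palmc (n + 2) = palmc (n + 1) := h2.symm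
  linear_combination (Real.exp (-x ^ 2 / 4) * (x * hermiteP (n + 1) x - (n + 1) * hermiteP n x)) * h2'
    + palmc (n + 1) * Real.exp (-x ^ 2 / 4) * hermiteP n x * hs

lemma palm_oscD_succ (n : ℕ) (x : ℝ) :
    oscD (n + 1) x = Real.sqrt (n + 1) * osc n x - x / 2 * osc (n + 1) x := by
  have h := palm_osc_rec n x
  unfold oscD
  have e : ((n + 1 : ℕ) : ℝ) + 1 = n + 2 := by push_cast; ring
  rw [e]
  linear_combination -h

lemma palm_oscD_hasDerivAt (n : ℕ) (x : ℝ) :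
    HasDerivAt (oscD n) ((x ^ 2 / 4 - n - 1 / 2) * osc n x) x := by
  have h := (((hasDerivAt_id' x).div_const 2).mul (palm_osc_hasDerivAt n x)).sub
    ((palm_osc_hasDerivAt (n + 1) x).const_mul (Real.sqrt (n + 1)))
  refine HasDerivAt.congr_deriv (f := oscD n) h ?_
  rw [palm_oscD_succ]
  have hs : Real.sqrt ((n:ℝ) + 1) ^ 2 = n + 1 := Real.sq_sqrt (by positivity)
  unfold oscD
  linear_combination -osc n x * hs

lemma palm_CD_diag (n : ℕ) (x : ℝ) :
    oscD n x ^ 2 - (x ^ 2 / 4 - n) * osc n x ^ 2 = ∑ k ∈ Finset.range n, osc k x ^ 2 := by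
  induction n with
  | zero =>
    have : oscD 0 x = -x / 2 * osc 0 x := by
      unfold oscD
      simp only [palm_osc_eq, palm_hermiteP_eq, palmc_succ 0, Polynomial.hermite_zero]
      simp
      ring
    rw [this]
    simp
    ring
  | succ n ih =>
    rw [Finset.sum_range_succ, ← ih, palm_oscD_succ]
    unfold oscD
    have hs : Real.sqrt ((n:ℝ) + 1) ^ 2 = n + 1 := Real.sq_sqrt (by positivity)
    push_cast
    linear_combination (osc n x ^ 2 - osc (n + 1) x ^ 2) * hs

lemma palm_CD_off (n : ℕ) (x y : ℝ) :
    osc n x * oscD n y - oscD n x * osc n y - (x - y) / 2 * (osc n x * osc n y) =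
      (x - y) * ∑ k ∈ Finset.range n, osc k x * osc k y := by
  induction n with
  | zero =>
    have : ∀ x, oscD 0 x = -x / 2 * osc 0 x := by
      intro x
      unfold oscD
      simp only [palm_osc_eq, palm_hermiteP_eq, palmc_succ 0, Polynomial.hermite_zero]
      simp
      ring
    rw [this, this]
    simp
    ring
  | succ n ih =>
    rw [Finset.sum_range_succ, mul_add, ← ih, palm_oscD_succ, palm_oscD_succ]
    unfold oscD
    ring

lemma palm_osc_zero_pos (x : ℝ) : 0 < osc 0 x := by
  rw [palm_osc_eq, palm_hermiteP_eq, Polynomial.hermite_zero]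
  have : 0 < palmc 0 := by unfold palmc; positivity
  simp
  positivity

/-- central values -/
lemma palm_osc_center (n : ℕ) : (osc n 0 ^ 2) ^ 2 * (n + 1) ≤ 1 := by
  induction n using Nat.twoStepInduction with
  | zero =>
    have h1 : osc 0 0 ≤ 1 := by
      rw [palm_osc_eq, palm_hermiteP_eq, Polynomial.hermite_zero]
      simp only [palmc]
      simp
      apply Real.rpow_le_one_of_one_le_of_nonpos
      · linarith [Real.pi_gt_three]
      · norm_num
    have h0 := palm_osc_zero_pos 0
    have := pow_le_one₀ h0.le h1 (n := 4)
    push_cast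
    nlinarith
  | one =>
    have : osc 1 0 = 0 := by
      rw [palm_osc_eq, palm_hermiteP_eq, Polynomial.hermite_one]; simp
    rw [this]; norm_num
  | more n ih _ =>
    have h := palm_osc_rec n 0
    have hs : Real.sqrt ((n:ℝ) + 1) ^ 2 = n + 1 := Real.sq_sqrt (by positivity)
    have hs2 : Real.sqrt ((n:ℝ) + 2) ^ 2 = n + 2 := Real.sq_sqrt (by positivity)
    have e : ((n:ℝ) + 2) * osc (n + 2) 0 ^ 2 = (n + 1) * osc n 0 ^ 2 := by
      have : (Real.sqrt (n + 2) * osc (n + 2) 0) ^ 2 = (Real.sqrt (n + 1) * osc n 0) ^ 2 := by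
        rw [h]; ring
      rw [mul_pow, mul_pow, hs, hs2] at this
      exact this
    have e2 : osc (n + 2) 0 ^ 2 = (n + 1) * osc n 0 ^ 2 / (n + 2) := by
      field_simp; linarith
    push_cast
    rw [e2]
    generalize osc n 0 ^ 2 = u at *
    have hn : (0:ℝ) ≤ n := by positivity
    have : ((↑n + 1) * u / (↑n + 2)) ^ 2 * (↑n + 2 + 1) =
        (u ^ 2 * (n + 1)) * (((n + 1) * (n + 3)) / (n + 2) ^ 2) := by
      field_simp; ring
    rw [this]
    apply mul_le_one₀ ih (by positivity)
    rw [div_le_one (by positivity)]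
    nlinarith

lemma palm_osc_tendsto (n : ℕ) : Tendsto (osc n) atTop (nhds 0) := by
  have h1 := (Polynomial.tendsto_div_exp_atTop
    ((Polynomial.hermite n).map (Int.castRingHom ℝ))).abs.const_mul |palmc n|
  simp only [abs_zero, mul_zero] at h1
  refine squeeze_zero_norm' ?_ h1
  filter_upwards [eventually_ge_atTop 4] with x hx
  rw [palm_osc_eq, palm_hermiteP_eq, Real.norm_eq_abs, abs_mul, abs_mul, abs_div, mul_assoc,
    Polynomial.eval_map, abs_of_pos (Real.exp_pos _), abs_of_pos (Real.exp_pos _), Polynomial.aeval_def, mul_comm (Real.exp _),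
    div_eq_mul_inv _ (Real.exp x), ← Real.exp_neg]
  have : Real.exp (-x ^ 2 / 4) ≤ Real.exp (-x) := by
    rw [Real.exp_le_exp]; nlinarith
  have e : Polynomial.eval₂ (algebraMap ℤ ℝ) x (Polynomial.hermite n) =
    Polynomial.eval₂ (Int.castRingHom ℝ) x (Polynomial.hermite n) := rfl
  rw [e]
  gcongr

/-- All facts about the rescaled oscillator functions which the estimates use. -/
lemma palm_data (n : ℕ) (hn : 1 ≤ n) : ∃ (s : ℝ) (f g : ℝ → ℝ), 1 ≤ s ∧
    s ^ 4 = (n : ℝ) ^ ((2:ℝ)/3) ∧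
    (∀ x, HasDerivAt f (g x) x) ∧ (∀ x, HasDerivAt g (palmP s x * f x) x) ∧
    Tendsto f atTop (nhds 0) ∧ palmE s f g (-2 * s ^ 4) ≤ 4 * s ^ 2 ∧
    (∀ x, KAiN n x x = palmE s f g x - 1 / (2 * s ^ 2) * f x ^ 2) ∧
    (∀ x y, x ≠ y → KAiN n x y = (f x * g y - g x * f y) / (x - y) -
      1 / (2 * s ^ 2) * (f x * f y)) ∧
    (∀ x, 0 < KAiN n x x) ∧
    (∀ x y, x ≠ y → KAiN n x y ^ 2 ≤ KAiN n x x * KAiN n y y) := by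
  have hn' : (1:ℝ) ≤ n := by exact_mod_cast hn
  have hn0 : (0:ℝ) ≤ n := by linarith
  set s : ℝ := (n:ℝ) ^ ((1:ℝ)/6) with hs
  have hs1 : 1 ≤ s := Real.one_le_rpow hn' (by norm_num)
  have hs0 : 0 < s := by linarith
  have hpow : ∀ k : ℕ, s ^ k = (n:ℝ) ^ ((k:ℝ)/6) := by
    intro k
    rw [hs, ← Real.rpow_natCast, ← Real.rpow_mul hn0]; congr 1; ring
  have hs2 : s ^ 2 = (n:ℝ) ^ ((1:ℝ)/3) := by rw [hpow]; norm_num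
  have hs4 : s ^ 4 = (n:ℝ) ^ ((2:ℝ)/3) := by rw [hpow]; norm_num
  have hs6 : s ^ 6 = n := by rw [hpow]; norm_num
  have hs3 : s ^ 3 = Real.sqrt n := by rw [hpow, Real.sqrt_eq_rpow]; norm_num
  have hsi : (n:ℝ) ^ (-(1:ℝ)/6) = s⁻¹ := by
    rw [hs, ← Real.rpow_neg hn0]; congr 1; ring
  set q : ℝ := (n:ℝ) ^ ((1:ℝ)/12) with hq
  have hq2 : q ^ 2 = s := by
    rw [hq, hs, ← Real.rpow_natCast, ← Real.rpow_mul hn0]; congr 1; norm_num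
  set τ : ℝ → ℝ := fun x => 2 * s ^ 3 + s⁻¹ * x with hτ
  set f := psiN n with hfd
  have hfe : ∀ x, f x = q * osc n (τ x) := by
    intro x
    simp only [hfd, psiN, psiUp, hτ, hs3, hsi, hq]
  set g : ℝ → ℝ := fun x => q * (s⁻¹ * oscD n (τ x)) with hg
  have hτd : ∀ x, HasDerivAt τ (s⁻¹) x := by
    intro x
    refine HasDerivAt.congr_deriv (f := τ)
      (((hasDerivAt_id' x).const_mul s⁻¹).const_add (2 * s ^ 3)) ?_
    ring
  have Hf : ∀ x, HasDerivAt f (g x) x := by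
    intro x
    have h := ((palm_osc_hasDerivAt n (τ x)).comp x (hτd x)).const_mul q
    have e : f = fun x => q * (osc n ∘ τ) x := funext hfe
    rw [e]
    refine HasDerivAt.congr_deriv h ?_
    simp only [hg]; ring
  have Hg : ∀ x, HasDerivAt g (palmP s x * f x) x := by
    intro x
    have h := (((palm_oscD_hasDerivAt n (τ x)).comp x (hτd x)).const_mul s⁻¹).const_mul q
    refine HasDerivAt.congr_deriv (f := g) h ?_
    rw [hfe, ← hs6]
    simp only [palmP, hτ]
    field_simp
    ring
  have hdf : deriv f = g := funext fun x => (Hf x).deriv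
  have hdg : ∀ x, deriv g x = palmP s x * f x := fun x => (Hg x).deriv
  have KD : ∀ x, KAiN n x x = palmE s f g x - 1 / (2 * s ^ 2) * f x ^ 2 := by
    intro x
    simp only [KAiN, if_true]
    rw [← hfd, hdf, hdg, ← hs2]
    unfold palmE; ring
  have KO : ∀ x y, x ≠ y → KAiN n x y = (f x * g y - g x * f y) / (x - y) -
      1 / (2 * s ^ 2) * (f x * f y) := by
    intro x y hxy
    simp only [KAiN, if_neg hxy]
    rw [← hfd, hdf, ← hs2]
  have KDs : ∀ x, KAiN n x x = s⁻¹ * ∑ k ∈ Finset.range n, osc k (τ x) ^ 2 := by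
    intro x
    rw [KD, ← palm_CD_diag, ← hs6]
    unfold palmE palmP
    rw [hfe]
    simp only [hg, mul_pow, hq2]
    simp only [hτ]
    field_simp
    ring
  have KOs : ∀ x y, x ≠ y → KAiN n x y =
      s⁻¹ * ∑ k ∈ Finset.range n, osc k (τ x) * osc k (τ y) := by
    intro x y hxy
    have h := palm_CD_off n (τ x) (τ y)
    have e : τ x - τ y = s⁻¹ * (x - y) := by simp only [hτ]; ring
    have hxy' : x - y ≠ 0 := sub_ne_zero.2 hxy
    have e2 : ∑ k ∈ Finset.range n, osc k (τ x) * osc k (τ y) =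
        (osc n (τ x) * oscD n (τ y) - oscD n (τ x) * osc n (τ y)
          - (τ x - τ y) / 2 * (osc n (τ x) * osc n (τ y))) / (τ x - τ y) := by
      rw [h, mul_div_cancel_left₀]
      rw [e]; positivity
    rw [KO x y hxy, e2, e, hfe, hfe]
    simp only [hg]
    have e3 : (q * osc n (τ x) * (q * (s⁻¹ * oscD n (τ y))) -
        q * (s⁻¹ * oscD n (τ x)) * (q * osc n (τ y))) =
        q ^ 2 * s⁻¹ * (osc n (τ x) * oscD n (τ y) - oscD n (τ x) * osc n (τ y)) := by ring
    have e4 : q * osc n (τ x) * (q * osc n (τ y)) = q ^ 2 * (osc n (τ x) * osc n (τ y)) := by ring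
    rw [e3, e4, hq2]
    field_simp
  refine ⟨s, f, g, hs1, hs4, Hf, Hg, ?_, ?_, KD, KO, ?_, ?_⟩
  · have hτt : Tendsto τ atTop atTop :=
      tendsto_atTop_add_const_left _ _ (tendsto_id.const_mul_atTop (by positivity))
    have h := ((palm_osc_tendsto n).comp hτt).const_mul q
    rw [mul_zero] at h
    exact h.congr fun x => (hfe x).symm
  · have hτ0 : τ (-2 * s ^ 4) = 0 := by simp only [hτ]; field_simp; ring
    have c1 := palm_osc_center n
    have c2 := palm_osc_center (n + 1)
    have e : palmE s f g (-2 * s ^ 4) =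
        s⁻¹ * ((s ^ 6 + 1) * osc (n + 1) 0 ^ 2 + (s ^ 6 + 1 / 2) * osc n 0 ^ 2) := by
      unfold palmE palmP
      rw [hfe]
      simp only [hg, hτ0, oscD, mul_pow, hq2]
      have hsq : Real.sqrt ((n:ℝ) + 1) ^ 2 = s ^ 6 + 1 := by
        rw [Real.sq_sqrt (by positivity), hs6]
      have : (0 / 2 * osc n 0 - Real.sqrt ((n:ℝ) + 1) * osc (n + 1) 0) ^ 2 =
        (s ^ 6 + 1) * osc (n + 1) 0 ^ 2 := by rw [← hsq]; ring
      rw [this]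
      field_simp
      ring
    push_cast at c2
    rw [← hs6] at c1 c2
    have hs31 : 1 ≤ s ^ 3 := one_le_pow₀ hs1
    have key : ∀ u : ℝ, 0 ≤ u → u ^ 2 * s ^ 6 ≤ 1 → u * s ^ 3 ≤ 1 := by
      intro u hu h
      by_contra hc
      push Not at hc
      nlinarith
    have d1 := key _ (sq_nonneg (osc n 0)) (by nlinarith [sq_nonneg (osc n 0 ^ 2)])
    have d2 := key _ (sq_nonneg (osc (n + 1) 0)) (by nlinarith [sq_nonneg (osc (n + 1) 0 ^ 2)])
    rw [e]
    have hsi0 : s⁻¹ * s = 1 := inv_mul_cancel₀ hs0.ne'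
    have e5 : 4 * s ^ 2 = s⁻¹ * (4 * s ^ 3) := by field_simp
    rw [e5]
    apply mul_le_mul_of_nonneg_left _ (by positivity)
    have hs61 : 1 ≤ s ^ 6 := one_le_pow₀ hs1
    have u1 := sq_nonneg (osc n 0)
    have u2 := sq_nonneg (osc (n + 1) 0)
    generalize osc n 0 ^ 2 = a at *
    generalize osc (n + 1) 0 ^ 2 = b at *
    have m1 : s ^ 6 * a ≤ s ^ 3 := by
      have : s ^ 6 * a = s ^ 3 * (a * s ^ 3) := by ring
      rw [this]; nlinarith
    have m2 : s ^ 6 * b ≤ s ^ 3 := by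
      have : s ^ 6 * b = s ^ 3 * (b * s ^ 3) := by ring
      rw [this]; nlinarith
    nlinarith
  · intro x
    rw [KDs]
    apply mul_pos (by positivity)
    have h0 : 0 < osc 0 (τ x) ^ 2 := pow_pos (palm_osc_zero_pos _) 2
    exact h0.trans_le (Finset.single_le_sum (f := fun k => osc k (τ x) ^ 2)
      (fun i _ => sq_nonneg _) (Finset.mem_range.2 hn))
  · intro x y hxy
    rw [KOs x y hxy, KDs, KDs, mul_pow]
    have := Finset.sum_mul_sq_le_sq_mul_sq (Finset.range n) (fun k => osc k (τ x))
      (fun k => osc k (τ y))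
    calc _ ≤ s⁻¹ ^ 2 * ((∑ k ∈ Finset.range n, osc k (τ x) ^ 2) *
        ∑ k ∈ Finset.range n, osc k (τ y) ^ 2) := by gcongr
      _ = _ := by ring

lemma palm_rpow {w : ℝ} (hw : 0 < w) :
    w ^ (-(3:ℝ)/2) = 1 / (w * Real.sqrt w) := by
  have : w ^ ((3:ℝ)/2) = w * Real.sqrt w := by
    rw [Real.sqrt_eq_rpow, ← Real.rpow_one_add' hw.le (by norm_num)]; norm_num
  rw [← this, one_div, ← Real.rpow_neg hw.le]
  norm_num

lemma palm_right_bound {s : ℝ} {f g : ℝ → ℝ} (hs : 1 ≤ s) (hf : ∀ x, HasDerivAt f (g x) x)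
    (hg : ∀ x, HasDerivAt g (palmP s x * f x) x) (h0 : Tendsto f atTop (nhds 0))
    (hE : palmE s f g (-2 * s ^ 4) ≤ 4 * s ^ 2) {y : ℝ} (hy : 1 ≤ y) :
    palmE s f g y ≤ 128 * Real.exp 18 * y ^ (-(3:ℝ)/2) := by
  have hs4 : 1 ≤ s ^ 4 := one_le_pow₀ hs
  have h1 := palmE_right hs hf hg h0 hy
  have h2 := palm_mid hs hf hg
  obtain ⟨h3, h4, -⟩ := palm_left hs hf hg hE (y := -1) (by linarith) le_rfl
  simp only [neg_neg, Real.sqrt_one, div_one, mul_one] at h3 h4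
  have h5 : palmE s f g 1 ≤ g 1 ^ 2 := by
    unfold palmE
    nlinarith [mul_nonneg (palmP_nonneg hs le_rfl) (sq_nonneg (f 1))]
  have e18 : Real.exp 18 = Real.exp 6 * Real.exp 12 := by rw [← Real.exp_add]; norm_num
  have h6 : y ^ 2 * palmE s f g y ≤ 128 * Real.exp 18 := by
    rw [e18]
    have := Real.exp_pos 6
    nlinarith [sq_nonneg (f 1 + g 1)]
  rw [palm_rpow (by linarith)]
  have hsy : Real.sqrt y ≤ y := by
    rw [Real.sqrt_le_left (by linarith)]; nlinarith
  have hsy0 : 0 < Real.sqrt y := Real.sqrt_pos.2 (by linarith)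
  rw [mul_one_div, le_div_iff₀ (by positivity)]
  by_cases hE0 : 0 ≤ palmE s f g y
  · calc palmE s f g y * (y * Real.sqrt y) ≤ palmE s f g y * (y * y) := by gcongr
      _ = y ^ 2 * palmE s f g y := by ring
      _ ≤ _ := h6
  · push Not at hE0
    have : palmE s f g y * (y * Real.sqrt y) ≤ 0 :=
      mul_nonpos_of_nonpos_of_nonneg hE0.le (by positivity)
    have := Real.exp_pos 18
    linarith

/-- left bound, uniform in large `s` -/
lemma palm_left_bound (x : ℝ) : ∃ c : ℝ, 0 < c ∧ ∀ (s : ℝ) (f g : ℝ → ℝ), 1 ≤ s →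
    |x| ≤ s ^ 4 →
    (∀ x, HasDerivAt f (g x) x) → (∀ x, HasDerivAt g (palmP s x * f x) x) →
    (∀ x, 0 ≤ palmE s f g x) → c * (f x ^ 2 + g x ^ 2) ≤ palmE s f g x := by
  set B : ℝ := (|x| + 1) + (|x| + 1) ^ 2 + 1 with hB
  have hx0 := abs_nonneg x
  have hB1 : 1 ≤ B := by nlinarith
  set d : ℝ := 1 / (2 * B) with hd
  have hd0 : 0 < d := by positivity
  have hd1 : d ≤ 1 := by rw [hd, div_le_one (by positivity)]; linarith
  refine ⟨d ^ 3 / 160, by positivity, ?_⟩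
  intro s f g hs hxs hf hg hE
  have hs4 : 1 ≤ s ^ 4 := one_le_pow₀ hs
  have h := palmE_lower hs hf hg (x := x) (d := d) (B := B) hd0 (by
      have : d ^ 2 * B = 1 / (4 * B) := by rw [hd]; field_simp; norm_num
      rw [this]
      apply one_div_le_one_div_of_le (by norm_num); linarith)
    (by linarith [neg_abs_le x])
    (by
      intro z hz hz'
      have hzx : |z| ≤ |x| + 1 := by
        rw [abs_le]; constructor <;> linarith [neg_abs_le x, le_abs_self x]
      have h1 : 1 / (2 * s ^ 2) ≤ 1 := by
        rw [div_le_one (by positivity)]; nlinarith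
      have h1' : 0 ≤ 1 / (2 * s ^ 2) := by positivity
      have h2 : 0 ≤ z ^ 2 / (4 * s ^ 4) := by positivity
      have h3 : z ^ 2 / (4 * s ^ 4) ≤ (|x| + 1) ^ 2 := by
        rw [div_le_iff₀ (by positivity), ← sq_abs z]
        have : |z| ^ 2 ≤ (|x| + 1) ^ 2 := by gcongr
        nlinarith [sq_nonneg (|x| + 1)]
      rw [abs_le] at hzx ⊢
      unfold palmP
      constructor <;> nlinarith)
    (hE _)
  refine le_trans ?_ h
  have e1 : d * f x ^ 2 + d ^ 2 * (f x * g x) + 3 / 10 * d ^ 3 * g x ^ 2 =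
      d * ((f x + d * g x / 2) ^ 2 + (d * g x) ^ 2 / 20) := by ring
  have e2 : d * f x ^ 2 + d ^ 2 * (f x * g x) + 3 / 10 * d ^ 3 * g x ^ 2 =
      d * (3 / 10 * (d * g x + 5 / 3 * f x) ^ 2 + f x ^ 2 / 6) := by ring
  have k1 : d ^ 3 / 20 * g x ^ 2 ≤
      d * f x ^ 2 + d ^ 2 * (f x * g x) + 3 / 10 * d ^ 3 * g x ^ 2 := by
    rw [e1]; nlinarith [mul_nonneg hd0.le (sq_nonneg (f x + d * g x / 2))]
  have k2 : d / 6 * f x ^ 2 ≤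
      d * f x ^ 2 + d ^ 2 * (f x * g x) + 3 / 10 * d ^ 3 * g x ^ 2 := by
    rw [e2]; nlinarith [mul_nonneg hd0.le (sq_nonneg (d * g x + 5 / 3 * f x))]
  have k3 : d ^ 3 ≤ d := by nlinarith [mul_nonneg hd0.le (sub_nonneg.2 hd1)]
  have k4 : d ^ 3 * f x ^ 2 ≤ d * f x ^ 2 := by gcongr
  have k5 : 0 ≤ d * f x ^ 2 := by positivity
  linarith


set_option maxHeartbeats 1000000

/-- positivity of the diagonal of the finite-`n` Airy kernel and decay of the
Palm-correction term `K_Aiⁿ(x,y)²/K_Aiⁿ(x,x)`. -/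
theorem palm_correction_decay (x : ℝ) :
    (∀ n : ℕ, 1 ≤ n → 0 < KAiN n x x) ∧
    ∃ C : ℝ, 0 < C ∧ ∀ n : ℕ, 1 ≤ n → ∀ y : ℝ,
      -(2 * (n : ℝ) ^ ((2:ℝ)/3)) ≤ y → |x| + 1 < |y| →
      (KAiN n x y) ^ 2 / KAiN n x x ≤ C * |y| ^ (-(3:ℝ)/2) := by
  refine ⟨fun n hn => ?_, ?_⟩
  · obtain ⟨s, f, g, -, -, -, -, -, -, -, -, hpos, -⟩ := palm_data n hn
    exact hpos x
  obtain ⟨c, hc, hlow⟩ := palm_left_bound x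
  have hx0 := abs_nonneg x
  set A : ℝ := |x| + 1 with hA
  set Cw : ℝ := 32 * Real.exp 12 with hCw
  have hCw0 : 0 < Cw := by positivity
  set T : ℝ := 1 / c + |x| + 1 with hT
  have hc' : 0 < 1 / c := by positivity
  refine ⟨128 * Real.exp 18 + 10 * A ^ 2 * Cw / c + 4 * Cw * T ^ 4, by positivity, ?_⟩
  intro n hn y hy hxy
  obtain ⟨s, f, g, hs, hs4e, hf, hg, h0, hE, KD, KO, hpos, hCS⟩ := palm_data n hn
  have hs4 : 1 ≤ s ^ 4 := one_le_pow₀ hs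
  have hs2 : 1 ≤ s ^ 2 := one_le_pow₀ hs
  rw [← hs4e] at hy
  have hEK : ∀ z, KAiN n z z ≤ palmE s f g z := by
    intro z
    rw [KD]
    have : 0 ≤ 1 / (2 * s ^ 2) * f z ^ 2 := by positivity
    linarith
  have hE0 : ∀ z, 0 ≤ palmE s f g z := fun z => (hpos z).le.trans (hEK z)
  have hne : x ≠ y := by
    rintro rfl
    linarith
  have hCS' : KAiN n x y ^ 2 / KAiN n x x ≤ palmE s f g y := by
    rw [div_le_iff₀ (hpos x)]
    rw [mul_comm]
    exact (hCS x y hne).trans (mul_le_mul_of_nonneg_left (hEK y) (hpos x).le)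
  have hZ : 0 < |y| ^ (-(3:ℝ)/2) := Real.rpow_pos_of_pos (by linarith) _
  have t1 : 0 ≤ 128 * Real.exp 18 := by positivity
  have t2 : 0 ≤ 10 * A ^ 2 * Cw / c := by positivity
  have t3 : 0 ≤ 4 * Cw * T ^ 4 := by positivity
  rcases le_total 0 y with hy0 | hy0
  · -- right side
    rw [abs_of_nonneg hy0] at hxy hZ ⊢
    have := palm_right_bound hs hf hg h0 hE (y := y) (by linarith)
    refine hCS'.trans (this.trans (mul_le_mul_of_nonneg_right ?_ hZ.le))
    linarith
  · rw [abs_of_nonpos hy0] at hxy hZ ⊢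
    obtain ⟨b1, b2, b3⟩ := palm_left hs hf hg hE (y := y) (by linarith) (by linarith)
    rw [← hCw] at b1 b2 b3
    set w := -y with hw
    have hw1 : 1 ≤ w := by linarith
    have hws : w ≤ 2 * s ^ 4 := by linarith
    rw [palm_rpow (by linarith)] at hZ ⊢
    set t := Real.sqrt w with ht
    have ht2 : t ^ 2 = w := Real.sq_sqrt (by linarith)
    have ht1 : 1 ≤ t := by rw [ht, Real.one_le_sqrt]; exact hw1
    rcases le_total T (s ^ 2) with hTs | hTs
    · -- large `s`
      have hxs : |x| ≤ s ^ 4 := by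
        have e1 : s ^ 4 = s ^ 2 * s ^ 2 := by ring
        have e2 : s ^ 2 ≤ s ^ 2 * s ^ 2 := le_mul_of_one_le_left (by positivity) hs2
        linarith
      have hl := hlow s f g hs hxs hf hg hE0
      set U := f x ^ 2 + g x ^ 2 with hU
      have hU0 : 0 ≤ U := by positivity
      have hKU : c / 2 * U ≤ KAiN n x x := by
        rw [KD]
        have e1 : 1 / (2 * s ^ 2) ≤ c / 2 := by
          rw [div_le_div_iff₀ (by positivity) (by norm_num)]
          have : 1 ≤ c * s ^ 2 := by
            have : 1 / c ≤ s ^ 2 := by linarith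
            rwa [div_le_iff₀' hc] at this
          linarith
        have e2 : 1 / (2 * s ^ 2) * f x ^ 2 ≤ c / 2 * U := by
          apply mul_le_mul e1 _ (sq_nonneg _) (by positivity)
          rw [hU]; linarith [sq_nonneg (g x)]
        linarith
      have hD : w / A ≤ x - y := by
        rw [div_le_iff₀ (by positivity)]
        have d1 : w - |x| ≤ x - y := by linarith [neg_abs_le x]
        have d2 : w ≤ (w - |x|) * A := by
          have : 0 ≤ |x| * (w - |x| - 1) := mul_nonneg hx0 (by linarith)
          rw [hA]; linarith
        exact d2.trans (mul_le_mul_of_nonneg_right d1 (by positivity))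
      have hD0 : 0 < w / A := by positivity
      have p1 : ((f x * g y - g x * f y) / (x - y)) ^ 2 ≤ 2 * A ^ 2 * Cw * U * (1 / (w * t)) := by
        have q1 : (f x * g y - g x * f y) ^ 2 ≤ U * (f y ^ 2 + g y ^ 2) := by
          rw [hU]; nlinarith [sq_nonneg (f x * f y + g x * g y)]
        have q2 : f y ^ 2 + g y ^ 2 ≤ 2 * Cw * t := by
          have : Cw / t ≤ Cw * t := by
            rw [div_le_iff₀ (by linarith)]
            have e1 : 1 ≤ t * t := by rw [← sq, ht2]; exact hw1
            have e2 : Cw * 1 ≤ Cw * (t * t) := mul_le_mul_of_nonneg_left e1 hCw0.le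
            linarith
          linarith
        rw [div_pow]
        calc (f x * g y - g x * f y) ^ 2 / (x - y) ^ 2
            ≤ (U * (2 * Cw * t)) / (w / A) ^ 2 := by
              gcongr
              exact q1.trans (by gcongr)
          _ = 2 * A ^ 2 * Cw * U * (1 / (w * t)) := by
              rw [← ht2]
              field_simp
      have p2 : (1 / (2 * s ^ 2) * (f x * f y)) ^ 2 ≤ 1 / 2 * Cw * U * (1 / (w * t)) := by
        have q1 : (1 / (2 * s ^ 2) * (f x * f y)) ^ 2 = 1 / (4 * s ^ 4) * (f x ^ 2 * f y ^ 2) := by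
          field_simp
          ring
        rw [q1]
        have q2 : 1 / (4 * s ^ 4) ≤ 1 / (2 * w) :=
          one_div_le_one_div_of_le (by positivity) (by linarith)
        have q3 : f x ^ 2 ≤ U := by rw [hU]; linarith [sq_nonneg (g x)]
        calc _ ≤ 1 / (2 * w) * (U * (Cw / t)) := by gcongr
          _ = _ := by field_simp
      have p3 : KAiN n x y ^ 2 ≤ 5 * A ^ 2 * Cw * U * (1 / (w * t)) := by
        rw [KO x y hne]
        have hA1 : 1 ≤ A ^ 2 := by rw [hA]; nlinarith
        have : Cw * U * (1 / (w * t)) ≤ A ^ 2 * (Cw * U * (1 / (w * t))) :=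
          le_mul_of_one_le_left (by positivity) hA1
        have e1 : ∀ a b : ℝ, (a - b) ^ 2 ≤ 2 * a ^ 2 + 2 * b ^ 2 := fun a b => by
          linarith [sq_nonneg (a + b), (by ring : (a - b) ^ 2 + (a + b) ^ 2 = 2 * a ^ 2 + 2 * b ^ 2)]
        refine (e1 _ _).trans ?_
        linarith
      have p4 : KAiN n x y ^ 2 / KAiN n x x ≤ 10 * A ^ 2 * Cw / c * (1 / (w * t)) := by
        rw [div_le_iff₀ (hpos x)]
        refine p3.trans ?_
        have : 10 * A ^ 2 * Cw / c * (1 / (w * t)) * (c / 2 * U) =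
            5 * A ^ 2 * Cw * U * (1 / (w * t)) := by field_simp; ring
        rw [← this]
        gcongr
      refine p4.trans (mul_le_mul_of_nonneg_right ?_ hZ.le)
      linarith
    · -- small `s`
      have k1 : w ^ 2 ≤ 4 * T ^ 4 := by
        have a1 : s ^ 4 ≤ T ^ 2 := by
          have : s ^ 4 = (s ^ 2) ^ 2 := by ring
          rw [this]; gcongr
        have a2 : w ≤ 2 * T ^ 2 := by linarith
        calc w ^ 2 ≤ (2 * T ^ 2) ^ 2 := by gcongr
          _ = _ := by ring
      have k2 : Cw * t = Cw * w ^ 2 * (1 / (w * t)) := by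
        rw [← ht2]; field_simp
      have k3 : Cw * w ^ 2 * (1 / (w * t)) ≤ 4 * Cw * T ^ 4 * (1 / (w * t)) := by
        have : Cw * w ^ 2 ≤ 4 * Cw * T ^ 4 := by
          calc Cw * w ^ 2 ≤ Cw * (4 * T ^ 4) := by gcongr
            _ = _ := by ring
        exact mul_le_mul_of_nonneg_right this hZ.le
      refine (hCS'.trans b3).trans (k2.le.trans (k3.trans
        (mul_le_mul_of_nonneg_right ?_ hZ.le)))
      linarith
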